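/- arXiv:2008.03204 — 4 statements merged into one kernel-verified Lean document; each statement's English description precedes it below -/
import Mathlib

section
/- Let H = 0, ζ > 0, p > 1, C > 0, and set χ := e^{−1/ζ}. Then for every t > 0, ∫₀ᵗ K(r)² dr = C² [ ζ^{−2p} (1/(2p−1)) (log(1/(t∧χ)))^{1−2p} + log( t/(t∧χ) ) ]. In particular K is square integrable on (0,t) even for H = 0. -/
open MeasureTheory

/-- The log-modulated kernel `K(r) = C r^{H-1/2} max(ζ log(1/r), 1)^{-p}`. -/
noncomputable def logKernel (H ζ p C r : ℝ) : ℝ :=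
  C * r ^ (H - 1/2) * (max (ζ * Real.log (1 / r)) 1) ^ (-p)

/-!
For `H = 0` the squared kernel is `C² ζ^{-2p} r⁻¹ (log (1/r))^{-2p}` below the cutoff `e^{-1/ζ}` and
`C² r⁻¹` above it. The first expression has the antiderivative
`C² ζ^{-2p} (log (1/r))^{1-2p} / (2p-1)`, which tends to `0` as `r ↓ 0` as soon as `p > 1/2`, so its
improper integral at `0` converges; the second integrates to a logarithm.
-/

open Filter Set Topology

section LogPower

variable {q a x : ℝ}

lemma hasDerivAt_neg_log_rpow_div (hq : q ≠ 1) (hx : Real.log x ≠ 0) :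
    HasDerivAt (fun y ↦ (-Real.log y) ^ (1 - q) / (q - 1)) (x⁻¹ * (-Real.log x) ^ (-q)) x := by
  have hx0 : x ≠ 0 := (Real.log_ne_zero.1 hx).1
  have hq0 : q - 1 ≠ 0 := sub_ne_zero.2 hq
  have hderiv := ((Real.hasDerivAt_log hx0).fun_neg.rpow_const (p := 1 - q)
    (Or.inl (neg_ne_zero.2 hx))).div_const (q - 1)
  refine hderiv.congr_deriv ?_
  rw [show 1 - q - 1 = -q by ring]
  field_simp
  ring

lemma tendsto_neg_log_rpow_nhdsGT_zero (hq : 1 < q) :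
    Tendsto (fun y ↦ (-Real.log y) ^ (1 - q)) (𝓝[>] 0) (𝓝 0) := by
  have hlog : Tendsto (fun y ↦ -Real.log y) (𝓝[>] 0) atTop :=
    tendsto_neg_atBot_atTop.comp Real.tendsto_log_nhdsGT_zero
  simpa only [Function.comp_def, neg_sub] using
    (tendsto_rpow_neg_atTop (sub_pos.2 hq)).comp hlog

-- Since `Real.log 0 = 0`, this is `0 ^ (1 - q) = 0`: the junk value is the limit at `0⁺`.
lemma neg_log_zero_rpow (hq : q ≠ 1) : (-Real.log 0) ^ (1 - q) = 0 := by
  rw [Real.log_zero, neg_zero, Real.zero_rpow (sub_ne_zero.2 hq.symm)]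

lemma continuousOn_neg_log_rpow_div (hq : 1 < q) :
    ContinuousOn (fun y ↦ (-Real.log y) ^ (1 - q) / (q - 1)) (Ico 0 1) := by
  rintro x ⟨hx0, hx1⟩
  rcases hx0.eq_or_lt with rfl | hxpos
  · have hright : ContinuousWithinAt (fun y ↦ (-Real.log y) ^ (1 - q) / (q - 1)) (Ioi 0) 0 := by
      simpa only [ContinuousWithinAt, neg_log_zero_rpow hq.ne'] using
        (tendsto_neg_log_rpow_nhdsGT_zero hq).div_const (q - 1)
    exact (continuousWithinAt_Ioi_iff_Ici.1 hright).mono Ico_subset_Ici_self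
  · exact (hasDerivAt_neg_log_rpow_div hq.ne'
      (Real.log_neg hxpos hx1).ne).continuousAt.continuousWithinAt

lemma intervalIntegrable_inv_mul_neg_log_rpow (hq : 1 < q) (ha0 : 0 ≤ a) (ha1 : a < 1) :
    IntervalIntegrable (fun r ↦ r⁻¹ * (-Real.log r) ^ (-q)) volume 0 a := by
  rw [intervalIntegrable_iff_integrableOn_Ioc_of_le ha0]
  refine intervalIntegral.integrableOn_deriv_of_nonneg
    ((continuousOn_neg_log_rpow_div hq).mono (Icc_subset_Ico_right ha1))
    (fun r hr ↦ hasDerivAt_neg_log_rpow_div hq.ne' (Real.log_neg hr.1 (hr.2.trans ha1)).ne)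
    fun r hr ↦ ?_
  have hlog : 0 < -Real.log r := neg_pos.2 (Real.log_neg hr.1 (hr.2.trans ha1))
  exact mul_nonneg (inv_nonneg.2 hr.1.le) (Real.rpow_nonneg hlog.le _)

lemma integral_inv_mul_neg_log_rpow (hq : 1 < q) (ha0 : 0 ≤ a) (ha1 : a < 1) :
    ∫ r in (0 : ℝ)..a, r⁻¹ * (-Real.log r) ^ (-q) = (-Real.log a) ^ (1 - q) / (q - 1) := by
  rw [intervalIntegral.integral_eq_sub_of_hasDerivAt_of_le ha0
      ((continuousOn_neg_log_rpow_div hq).mono (Icc_subset_Ico_right ha1))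
      (fun r hr ↦ hasDerivAt_neg_log_rpow_div hq.ne' (Real.log_neg hr.1 (hr.2.trans ha1)).ne)
      (intervalIntegrable_inv_mul_neg_log_rpow hq ha0 ha1),
    neg_log_zero_rpow hq.ne', zero_div, sub_zero]

end LogPower

section Kernel

variable {H ζ p C r a b : ℝ}

lemma one_le_mul_log_one_div_iff (hζ : 0 < ζ) (hr : 0 < r) :
    1 ≤ ζ * Real.log (1 / r) ↔ r ≤ Real.exp (-1 / ζ) := by
  rw [← Real.log_le_iff_le_exp hr, one_div, Real.log_inv, ← div_le_iff₀' hζ, neg_div, le_neg]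

lemma mul_log_one_div_le_one_iff (hζ : 0 < ζ) (hr : 0 < r) :
    ζ * Real.log (1 / r) ≤ 1 ↔ Real.exp (-1 / ζ) ≤ r := by
  rw [← Real.le_log_iff_exp_le hr, one_div, Real.log_inv, ← le_div_iff₀' hζ, neg_div, neg_le]

lemma exp_neg_one_div_lt_one (hζ : 0 < ζ) : Real.exp (-1 / ζ) < 1 :=
  Real.exp_lt_one_iff.2 (div_neg_of_neg_of_pos neg_one_lt_zero hζ)

lemma logKernel_sq (hr : 0 ≤ r) :
    logKernel H ζ p C r ^ 2
      = C ^ 2 * r ^ (2 * H - 1) * max (ζ * Real.log (1 / r)) 1 ^ (-(2 * p)) := by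
  have hmax : 0 ≤ max (ζ * Real.log (1 / r)) 1 := zero_le_one.trans (le_max_right _ _)
  rw [logKernel, mul_pow, mul_pow, ← Real.rpow_mul_natCast hr, ← Real.rpow_mul_natCast hmax]
  push_cast
  ring_nf

lemma logKernel_sq_of_le_exp (hζ : 0 < ζ) (hr : 0 < r) (hrχ : r ≤ Real.exp (-1 / ζ)) :
    logKernel H ζ p C r ^ 2
      = C ^ 2 * ζ ^ (-(2 * p)) * (r ^ (2 * H - 1) * (-Real.log r) ^ (-(2 * p))) := by
  have hlog : 0 ≤ -Real.log r :=
    neg_nonneg.2 (Real.log_nonpos hr.le (hrχ.trans (exp_neg_one_div_lt_one hζ).le))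
  rw [logKernel_sq hr.le, max_eq_left ((one_le_mul_log_one_div_iff hζ hr).2 hrχ), one_div,
    Real.log_inv, Real.mul_rpow hζ.le hlog]
  ring

lemma logKernel_sq_of_exp_le (hζ : 0 < ζ) (hχr : Real.exp (-1 / ζ) ≤ r) :
    logKernel H ζ p C r ^ 2 = C ^ 2 * r ^ (2 * H - 1) := by
  have hr : 0 < r := (Real.exp_pos _).trans_le hχr
  rw [logKernel_sq hr.le, max_eq_right ((mul_log_one_div_le_one_iff hζ hr).2 hχr),
    Real.one_rpow, mul_one]

lemma eqOn_logKernel_zero_sq_of_le_exp (hζ : 0 < ζ) (ha0 : 0 ≤ a)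
    (haχ : a ≤ Real.exp (-1 / ζ)) :
    EqOn (fun r ↦ C ^ 2 * ζ ^ (-(2 * p)) * (r⁻¹ * (-Real.log r) ^ (-(2 * p))))
      (fun r ↦ logKernel 0 ζ p C r ^ 2) (uIoc 0 a) := by
  intro r hr
  rw [uIoc_of_le ha0] at hr
  simp only [logKernel_sq_of_le_exp hζ hr.1 (hr.2.trans haχ), mul_zero, zero_sub,
    Real.rpow_neg_one]

lemma eqOn_logKernel_zero_sq_of_exp_le (hζ : 0 < ζ) (haχ : Real.exp (-1 / ζ) ≤ a)
    (hbχ : Real.exp (-1 / ζ) ≤ b) :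
    EqOn (fun r ↦ C ^ 2 * r⁻¹) (fun r ↦ logKernel 0 ζ p C r ^ 2) (uIoc a b) := by
  intro r hr
  have hχr : Real.exp (-1 / ζ) ≤ r := (le_min haχ hbχ).trans hr.1.le
  simp only [logKernel_sq_of_exp_le hζ hχr, mul_zero, zero_sub, Real.rpow_neg_one]

lemma intervalIntegrable_logKernel_zero_sq_of_le_exp (hζ : 0 < ζ) (hp : 1 / 2 < p)
    (ha0 : 0 ≤ a) (haχ : a ≤ Real.exp (-1 / ζ)) :
    IntervalIntegrable (fun r ↦ logKernel 0 ζ p C r ^ 2) volume 0 a :=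
  ((intervalIntegrable_inv_mul_neg_log_rpow (by linarith) ha0
    (haχ.trans_lt (exp_neg_one_div_lt_one hζ))).const_mul _).congr
      (eqOn_logKernel_zero_sq_of_le_exp hζ ha0 haχ)

lemma integral_logKernel_zero_sq_of_le_exp (hζ : 0 < ζ) (hp : 1 / 2 < p)
    (ha0 : 0 ≤ a) (haχ : a ≤ Real.exp (-1 / ζ)) :
    ∫ r in (0 : ℝ)..a, logKernel 0 ζ p C r ^ 2
      = C ^ 2 * (ζ ^ (-(2 * p)) * (1 / (2 * p - 1)) * Real.log (1 / a) ^ (1 - 2 * p)) := by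
  rw [← intervalIntegral.integral_congr_ae
      (.of_forall (eqOn_logKernel_zero_sq_of_le_exp hζ ha0 haχ)),
    intervalIntegral.integral_const_mul, integral_inv_mul_neg_log_rpow (by linarith) ha0
      (haχ.trans_lt (exp_neg_one_div_lt_one hζ)), one_div a, Real.log_inv]
  ring

lemma intervalIntegrable_logKernel_zero_sq_of_exp_le (hζ : 0 < ζ)
    (haχ : Real.exp (-1 / ζ) ≤ a) (hbχ : Real.exp (-1 / ζ) ≤ b) :
    IntervalIntegrable (fun r ↦ logKernel 0 ζ p C r ^ 2) volume a b := by
  have hpos : ∀ r ∈ uIcc a b, r ≠ 0 := fun r hr ↦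
    ((Real.exp_pos _).trans_le ((le_min haχ hbχ).trans hr.1)).ne'
  exact ((intervalIntegral.intervalIntegrable_inv hpos continuousOn_id).const_mul _).congr
    (eqOn_logKernel_zero_sq_of_exp_le hζ haχ hbχ)

lemma integral_logKernel_zero_sq_of_exp_le (hζ : 0 < ζ)
    (haχ : Real.exp (-1 / ζ) ≤ a) (hbχ : Real.exp (-1 / ζ) ≤ b) :
    ∫ r in a..b, logKernel 0 ζ p C r ^ 2 = C ^ 2 * Real.log (b / a) := by
  rw [← intervalIntegral.integral_congr_ae
      (.of_forall (eqOn_logKernel_zero_sq_of_exp_le hζ haχ hbχ)),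
    intervalIntegral.integral_const_mul,
    integral_inv_of_pos ((Real.exp_pos _).trans_le haχ) ((Real.exp_pos _).trans_le hbχ)]

end Kernel

theorem variance_log_fbm_H_zero_general (ζ p C : ℝ)
    (hζ : 0 < ζ) (hp : 1 / 2 < p) (χ : ℝ) (hχ : χ = Real.exp (-1 / ζ)) :
    ∀ t : ℝ, 0 < t →
      (∫ r in (0 : ℝ)..t, (logKernel 0 ζ p C r) ^ 2
        = C ^ 2 * (ζ ^ (-(2 * p)) * (1 / (2 * p - 1))
              * (Real.log (1 / min t χ)) ^ (1 - 2 * p)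
            + Real.log (t / min t χ)))
      ∧ IntervalIntegrable (fun r => (logKernel 0 ζ p C r) ^ 2) volume 0 t := by
  intro t ht
  subst hχ
  rcases le_total t (Real.exp (-1 / ζ)) with htχ | hχt
  · rw [min_eq_left htχ, div_self ht.ne', Real.log_one, add_zero]
    exact ⟨integral_logKernel_zero_sq_of_le_exp hζ hp ht.le htχ,
      intervalIntegrable_logKernel_zero_sq_of_le_exp hζ hp ht.le htχ⟩
  · have hχ0 := (Real.exp_pos (-1 / ζ)).le
    have hbelow := intervalIntegrable_logKernel_zero_sq_of_le_exp (C := C) hζ hp hχ0 le_rfl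
    have habove := intervalIntegrable_logKernel_zero_sq_of_exp_le (p := p) (C := C) hζ le_rfl hχt
    refine ⟨?_, hbelow.trans habove⟩
    rw [min_eq_right hχt, ← intervalIntegral.integral_add_adjacent_intervals hbelow habove,
      integral_logKernel_zero_sq_of_le_exp hζ hp hχ0 le_rfl,
      integral_logKernel_zero_sq_of_exp_le hζ le_rfl hχt, mul_add]

theorem variance_log_fbm_H_zero (ζ p C : ℝ)
    (hζ : 0 < ζ) (hp : 1 < p) (hC : 0 < C) (χ : ℝ) (hχ : χ = Real.exp (-1/ζ)) :
    ∀ t : ℝ, 0 < t →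
      (∫ r in (0 : ℝ)..t, (logKernel 0 ζ p C r) ^ 2
        = C ^ 2 * (ζ ^ (-(2 * p)) * (1 / (2 * p - 1))
              * (Real.log (1 / min t χ)) ^ (1 - 2 * p)
            + Real.log (t / min t χ)))
      ∧ IntervalIntegrable (fun r => (logKernel 0 ζ p C r) ^ 2) volume 0 t :=
  variance_log_fbm_H_zero_general ζ p C hζ (by linarith) χ hχ
end

section
/- Let ζ > 0, p > 1, and set χ := e^{−1/ζ} (so χ < 1). Define the normalization constant C_{H,ζ,p} := [ (1/ζ) E_{2p}(2H/ζ) + (1 − χ^{2H})/(2H) ]^{−1/2} if 0 < H < 1/2, and C_{0,ζ,p} := [ 2p/((2p−1)ζ) ]^{−1/2} if H = 0. Then with C := C_{H,ζ,p} in the definition of the kernel K, one has ∫₀¹ K(r)² dr = 1, i.e. the log-modulated fractional Brownian motion has unit variance at time 1. -/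
open MeasureTheory

/-- The exponential integral `E_b(x) = ∫₁^∞ e^{-x t} t^{-b} dt`. -/
noncomputable def expIntegralE (b x : ℝ) : ℝ :=
  ∫ t in Set.Ioi (1 : ℝ), Real.exp (-x * t) * t ^ (-b)

/-- The normalization constant `C_{H,ζ,p}` making the log-fBm have unit variance at time 1. -/
noncomputable def normConst (H ζ p : ℝ) : ℝ :=
  if H = 0 then (2 * p / ((2 * p - 1) * ζ)) ^ (-(1/2) : ℝ)
  else ((1/ζ) * expIntegralE (2 * p) (2 * H / ζ)
      + (1 - (Real.exp (-1/ζ)) ^ (2 * H)) / (2 * H)) ^ (-(1/2) : ℝ)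

/-!
The substitution `r = e^{-t/ζ}`, that is `t = ζ log (1/r)`, turns the modulation
`max (ζ log (1/r)) 1` into `max t 1` and `r^{2H-1} dr` into `ζ⁻¹ e^{-(2H/ζ) t} dt` (up to
orientation). Hence for `C = 1` the integral of `K²` is
`ζ⁻¹ ∫₀^∞ e^{-(2H/ζ) t} (max t 1)^{-2p} dt`. The part over `(0, 1]` is elementary, the part over
`(1, ∞)` is `E_{2p}(2H/ζ)`, and `C_{H,ζ,p}` is the inverse square root of the result.
-/

open Set Filter Asymptotics

section ExponentialSubstitution

variable {a : ℝ}

lemma image_exp_neg_div_Ioi_zero (ha : 0 < a) :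
    (fun t : ℝ ↦ Real.exp (-t / a)) '' Ioi 0 = Ioo 0 1 := by
  ext r
  constructor
  · rintro ⟨t, ht : 0 < t, rfl⟩
    exact ⟨Real.exp_pos _, Real.exp_lt_one_iff.2 (div_neg_of_neg_of_pos (neg_neg_of_pos ht) ha)⟩
  · rintro ⟨hr₀, hr₁⟩
    refine ⟨-(a * Real.log r), neg_pos.2 (mul_neg_of_pos_of_neg ha (Real.log_neg hr₀ hr₁)), ?_⟩
    simp only [neg_neg, mul_div_cancel_left₀ _ ha.ne', Real.exp_log hr₀]

lemma integral_zero_one_eq_integral_Ioi_exp_neg_div {E : Type*} [NormedAddCommGroup E]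
    [NormedSpace ℝ E] (ha : 0 < a) (g : ℝ → E) :
    ∫ r in (0 : ℝ)..1, g r =
      ∫ t in Ioi (0 : ℝ), (Real.exp (-t / a) / a) • g (Real.exp (-t / a)) := by
  have hderiv : ∀ t ∈ Ioi (0 : ℝ), HasDerivWithinAt (fun t ↦ Real.exp (-t / a))
      (Real.exp (-t / a) * (-1 / a)) (Ioi 0) t := fun t _ ↦
    ((hasDerivAt_id t).neg.div_const a).exp.hasDerivWithinAt
  have hanti : AntitoneOn (fun t ↦ Real.exp (-t / a)) (Ioi 0) := fun s _ t _ hst ↦ by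
    dsimp only
    gcongr
  rw [intervalIntegral.integral_of_le zero_le_one, integral_Ioc_eq_integral_Ioo,
    ← image_exp_neg_div_Ioi_zero ha,
    integral_image_eq_integral_deriv_smul_of_antitoneOn measurableSet_Ioi hderiv hanti]
  congr! 3
  ring

end ExponentialSubstitution

section ExponentialIntegral

variable {b c x : ℝ}

lemma integrableOn_exp_neg_mul_mul_rpow_Ioi (hc : 0 < c) (hx : 0 ≤ x) (hb : x = 0 → 1 < b) :
    IntegrableOn (fun t : ℝ ↦ Real.exp (-x * t) * t ^ (-b)) (Ioi c) := by
  rcases hx.eq_or_lt with rfl | hx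
  · simpa using integrableOn_Ioi_rpow_of_lt (neg_lt_neg (hb rfl)) hc
  · -- half of the exponential decay absorbs the power
    have hpow : (fun t : ℝ ↦ t ^ (-b)) =O[atTop] fun t ↦ Real.exp (x / 2 * t) :=
      (isLittleO_rpow_exp_pos_mul_atTop (-b) (half_pos hx)).isBigO
    refine integrable_of_isBigO_exp_neg (half_pos hx) ?_ ?_
    · exact ContinuousOn.mul (by fun_prop)
        (continuousOn_id.rpow_const fun t ht ↦ .inl (hc.trans_le ht).ne')
    · refine ((isBigO_refl (fun t ↦ Real.exp (-x * t)) atTop).mul hpow).congr_right fun t ↦ ?_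
      rw [← Real.exp_add]
      ring_nf

lemma expIntegralE_nonneg (b x : ℝ) : 0 ≤ expIntegralE b x :=
  setIntegral_nonneg measurableSet_Ioi fun _ ht ↦
    mul_nonneg (Real.exp_nonneg _) (Real.rpow_nonneg (zero_le_one.trans (mem_Ioi.1 ht).le) _)

lemma expIntegralE_zero_right (hb : 1 < b) : expIntegralE b 0 = 1 / (b - 1) := by
  simp only [expIntegralE, neg_zero, zero_mul, Real.exp_zero, one_mul]
  rw [integral_Ioi_rpow_of_lt (neg_lt_neg hb) one_pos, Real.one_rpow, neg_div, ← div_neg]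
  ring_nf

lemma integral_Ioi_exp_neg_mul_mul_max_rpow (hx : 0 ≤ x) (hb : x = 0 → 1 < b) :
    ∫ t in Ioi (0 : ℝ), Real.exp (-x * t) * max t 1 ^ (-b) =
      (∫ t in (0 : ℝ)..1, Real.exp (-x * t)) + expIntegralE b x := by
  have hIoc : EqOn (fun t : ℝ ↦ Real.exp (-x * t) * max t 1 ^ (-b))
      (fun t ↦ Real.exp (-x * t)) (Ioc 0 1) := fun t ht ↦ by
    simp [max_eq_right ht.2]
  have hIoi : EqOn (fun t : ℝ ↦ Real.exp (-x * t) * max t 1 ^ (-b))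
      (fun t ↦ Real.exp (-x * t) * t ^ (-b)) (Ioi 1) := fun t ht ↦ by
    simp only [max_eq_left (mem_Ioi.1 ht).le]
  have hint_Ioc : IntegrableOn (fun t : ℝ ↦ Real.exp (-x * t)) (Ioc 0 1) :=
    Continuous.integrableOn_Ioc (by fun_prop)
  have hint_Ioi := integrableOn_exp_neg_mul_mul_rpow_Ioi one_pos hx hb
  rw [← Ioc_union_Ioi_eq_Ioi zero_le_one,
    setIntegral_union (Ioc_disjoint_Ioi le_rfl) measurableSet_Ioi
      (hint_Ioc.congr_fun hIoc.symm measurableSet_Ioc)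
      (hint_Ioi.congr_fun hIoi.symm measurableSet_Ioi),
    setIntegral_congr_fun measurableSet_Ioc hIoc, setIntegral_congr_fun measurableSet_Ioi hIoi,
    intervalIntegral.integral_of_le zero_le_one, expIntegralE]

lemma integral_zero_one_exp_neg_mul (hx : x ≠ 0) :
    ∫ t in (0 : ℝ)..1, Real.exp (-x * t) = (1 - Real.exp (-x)) / x := by
  rw [intervalIntegral.integral_comp_mul_left Real.exp (neg_ne_zero.2 hx), integral_exp]
  simp only [mul_one, mul_zero, Real.exp_zero, smul_eq_mul]
  field_simp
  ring

end ExponentialIntegral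

/-- The variance at time `1` of the log-modulated process before normalization, that is
`∫₀¹ K(r)² dr` for the kernel `K` with `C = 1`. -/
noncomputable def logKernelVariance (H ζ p : ℝ) : ℝ :=
  ∫ r in (0 : ℝ)..1, logKernel H ζ p 1 r ^ 2

section LogKernel

variable {H ζ p : ℝ}

lemma integral_logKernel_sq (H ζ p C : ℝ) :
    ∫ r in (0 : ℝ)..1, logKernel H ζ p C r ^ 2 = C ^ 2 * logKernelVariance H ζ p := by
  rw [logKernelVariance, ← intervalIntegral.integral_const_mul]
  congr! 2
  simp only [logKernel]
  ring

lemma exp_mul_logKernel_exp_sq (H p t : ℝ) (hζ : ζ ≠ 0) :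
    Real.exp (-t / ζ) * logKernel H ζ p 1 (Real.exp (-t / ζ)) ^ 2 =
      Real.exp (-(2 * H / ζ) * t) * max t 1 ^ (-(2 * p)) := by
  have hlog : ζ * Real.log (1 / Real.exp (-t / ζ)) = t := by
    rw [one_div, Real.log_inv, Real.log_exp]
    field_simp
  have hmax : (max t 1 ^ (-p)) ^ 2 = max t 1 ^ (-(2 * p)) := by
    rw [← Real.rpow_mul_natCast (zero_le_one.trans (le_max_right t 1))]
    ring_nf
  have hexp : Real.exp (-t / ζ) * (Real.exp (-t / ζ) ^ (H - 1 / 2)) ^ 2 =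
      Real.exp (-(2 * H / ζ) * t) := by
    rw [← Real.exp_mul, ← Real.exp_nat_mul, ← Real.exp_add]
    ring_nf
  rw [logKernel, hlog, one_mul, mul_pow, hmax, ← mul_assoc, hexp]

lemma logKernelVariance_eq_integral_exp_add_expIntegralE (hH : 0 ≤ H) (hζ : 0 < ζ)
    (hp : H = 0 → 1 / 2 < p) :
    logKernelVariance H ζ p = 1 / ζ *
      ((∫ t in (0 : ℝ)..1, Real.exp (-(2 * H / ζ) * t)) + expIntegralE (2 * p) (2 * H / ζ)) := by
  have hb : 2 * H / ζ = 0 → 1 < 2 * p := fun h ↦ by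
    have hH₀ : H = 0 := by simpa [hζ.ne'] using h
    linarith [hp hH₀]
  rw [logKernelVariance, integral_zero_one_eq_integral_Ioi_exp_neg_div hζ,
    ← integral_Ioi_exp_neg_mul_mul_max_rpow (by positivity) hb, ← integral_const_mul]
  refine setIntegral_congr_fun measurableSet_Ioi fun t _ ↦ ?_
  rw [← exp_mul_logKernel_exp_sq H p t hζ.ne', smul_eq_mul]
  ring

lemma logKernelVariance_pos (hH : 0 ≤ H) (hζ : 0 < ζ) (hp : H = 0 → 1 / 2 < p) :
    0 < logKernelVariance H ζ p := by
  have hexp : 0 < ∫ t in (0 : ℝ)..1, Real.exp (-(2 * H / ζ) * t) :=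
    intervalIntegral.intervalIntegral_pos_of_pos
      (Continuous.intervalIntegrable (by fun_prop) _ _) (fun _ ↦ Real.exp_pos _) one_pos
  rw [logKernelVariance_eq_integral_exp_add_expIntegralE hH hζ hp]
  exact mul_pos (one_div_pos.2 hζ) (add_pos_of_pos_of_nonneg hexp (expIntegralE_nonneg _ _))

lemma logKernelVariance_zero_left (hζ : 0 < ζ) (hp : 1 / 2 < p) :
    logKernelVariance 0 ζ p = 2 * p / ((2 * p - 1) * ζ) := by
  have hp' : 2 * p - 1 ≠ 0 := by linarith
  rw [logKernelVariance_eq_integral_exp_add_expIntegralE le_rfl hζ fun _ ↦ hp, mul_zero, zero_div,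
    expIntegralE_zero_right (by linarith)]
  simp only [neg_zero, zero_mul, Real.exp_zero, intervalIntegral.integral_const, sub_zero, one_smul]
  field_simp
  ring

lemma logKernelVariance_of_pos (hH : 0 < H) (hζ : 0 < ζ) (p : ℝ) :
    logKernelVariance H ζ p = 1 / ζ * expIntegralE (2 * p) (2 * H / ζ) +
      (1 - Real.exp (-1 / ζ) ^ (2 * H)) / (2 * H) := by
  have hχ : Real.exp (-1 / ζ) ^ (2 * H) = Real.exp (-(2 * H / ζ)) := by
    rw [← Real.exp_mul]
    ring_nf
  rw [logKernelVariance_eq_integral_exp_add_expIntegralE hH.le hζ fun h ↦ absurd h hH.ne',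
    integral_zero_one_exp_neg_mul (by positivity), hχ]
  field_simp
  ring

lemma normConst_eq_logKernelVariance_rpow (hH : 0 ≤ H) (hζ : 0 < ζ) (hp : H = 0 → 1 / 2 < p) :
    normConst H ζ p = logKernelVariance H ζ p ^ (-(1 / 2) : ℝ) := by
  rcases hH.eq_or_lt with rfl | hH
  · rw [normConst, if_pos rfl, logKernelVariance_zero_left hζ (hp rfl)]
  · rw [normConst, if_neg hH.ne', logKernelVariance_of_pos hH hζ]

end LogKernel

theorem normalization_unit_variance_general (H ζ p : ℝ) (hH : 0 ≤ H) (hζ : 0 < ζ)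
    (hp : H = 0 → 1 / 2 < p) :
    ∫ r in (0 : ℝ)..1, (logKernel H ζ p (normConst H ζ p) r) ^ 2 = 1 := by
  have hV : 0 < logKernelVariance H ζ p := logKernelVariance_pos hH hζ hp
  have hinv : (logKernelVariance H ζ p ^ (-(1 / 2) : ℝ)) ^ 2 = (logKernelVariance H ζ p)⁻¹ := by
    rw [← Real.rpow_mul_natCast hV.le, ← Real.rpow_neg_one]
    norm_num
  rw [integral_logKernel_sq, normConst_eq_logKernelVariance_rpow hH hζ hp, hinv,
    inv_mul_cancel₀ hV.ne']

theorem normalization_unit_variance (H ζ p : ℝ) (hH0 : 0 ≤ H) (hH : H < 1/2)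
    (hζ : 0 < ζ) (hp : 1 < p) :
    ∫ r in (0 : ℝ)..1, (logKernel H ζ p (normConst H ζ p) r) ^ 2 = 1 := by
  exact normalization_unit_variance_general H ζ p hH0 hζ fun _ ↦ by linarith
end

section
/- Let H ∈ [0,1/2), ζ > 0, p > 1, C > 0. As T → 0⁺, the integrated kernel satisfies the asymptotic equivalence ∫₀ᵀ ∫₀ˢ K(s−r) dr ds ∼ ( C ζ^{−p} / ( (H+1/2)(H+3/2) ) ) · (log(1/T))^{−p} · T^{H+3/2}; equivalently, T^{−3/2} ∫₀ᵀ ∫₀ˢ K(s−r) dr ds ∼ ( C ζ^{−p} / ( (H+1/2)(H+3/2) ) ) (log(1/T))^{−p} T^{H} as T → 0⁺. -/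
open MeasureTheory Filter

/-!
Near `0` the kernel is exactly a multiple of `t ^ (H - 1/2) * log (1 / t) ^ (-p)`. Functions of this
form are regularly varying, and Karamata's theorem says that integrating from `0` raises the power
by one, divides by the new power and leaves the logarithm alone: differentiating
`t ^ (α + 1) * log (1 / t) ^ β` gives `t ^ α * log (1 / t) ^ β` times `α + 1 - β / log (1 / t)`,
which tends to `α + 1`. After the substitution `r ↦ s - r` the double integral is a twofold
primitive of the kernel, so Karamata's theorem is applied twice.
-/

section Primitive

open Set Topology Asymptotics

variable {E F : Type*} [NormedAddCommGroup E] [NormedAddCommGroup F] {μ : Measure ℝ} {a : ℝ}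

lemma tendsto_Ioc_nhdsGT_smallSets (a : ℝ) :
    Tendsto (fun x ↦ Ioc a x) (𝓝[>] a) (𝓝[>] a).smallSets :=
  (tendsto_const_pure.mono_right (pure_le_nhdsWithin self_mem_Ici)).Ioc
    (tendsto_id.mono_right (nhdsWithin_mono a Ioi_subset_Ici_self))

lemma eventually_forall_mem_Ioc_of_eventually_nhdsGT {P : ℝ → Prop} (hP : ∀ᶠ t in 𝓝[>] a, P t) :
    ∀ᶠ x in 𝓝[>] a, ∀ t ∈ Ioc a x, P t :=
  (tendsto_Ioc_nhdsGT_smallSets a).eventually hP.smallSets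

lemma eventually_intervalIntegrable_of_integrableAtFilter_nhdsGT {f : ℝ → E}
    (hf : IntegrableAtFilter f (𝓝[>] a) μ) :
    ∀ᶠ x in 𝓝[>] a, IntervalIntegrable f μ a x := by
  filter_upwards [(tendsto_Ioc_nhdsGT_smallSets a).eventually hf.eventually, self_mem_nhdsWithin]
    with x hx hax
  exact (intervalIntegrable_iff_integrableOn_Ioc_of_le (le_of_lt hax)).2 hx

lemma stronglyMeasurableAtFilter_integral_nhdsGT [NormedSpace ℝ E] [NullSingletonClass μ]
    {f : ℝ → E} (hf : IntegrableAtFilter f (𝓝[>] a) μ) :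
    StronglyMeasurableAtFilter (fun x ↦ ∫ t in a..x, f t ∂μ) (𝓝[>] a) μ := by
  obtain ⟨b, hfb, hab⟩ :=
    ((eventually_intervalIntegrable_of_integrableAtFilter_nhdsGT hf).and
      self_mem_nhdsWithin).exists
  have hcont := intervalIntegral.continuousOn_primitive_interval' hfb left_mem_uIcc
  rw [uIcc_of_le (le_of_lt hab)] at hcont
  exact ⟨Ioc a b, Ioc_mem_nhdsGT hab,
    (hcont.mono Ioc_subset_Icc_self).aestronglyMeasurable measurableSet_Ioc⟩

lemma isLittleO_integral_nhdsGT [NormedSpace ℝ E] {f : ℝ → E} {g : ℝ → F} (hfg : f =o[𝓝[>] a] g)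
    (hg : IntegrableAtFilter g (𝓝[>] a) μ) :
    (fun x ↦ ∫ t in a..x, f t ∂μ) =o[𝓝[>] a] fun x ↦ ∫ t in a..x, ‖g t‖ ∂μ := by
  refine isLittleO_iff.2 fun ε hε ↦ ?_
  filter_upwards [eventually_forall_mem_Ioc_of_eventually_nhdsGT (hfg.bound hε),
    eventually_intervalIntegrable_of_integrableAtFilter_nhdsGT hg, self_mem_nhdsWithin]
    with x hbound hgx hax
  calc ‖∫ t in a..x, f t ∂μ‖
      ≤ ∫ t in a..x, ε * ‖g t‖ ∂μ :=
        intervalIntegral.norm_integral_le_of_norm_le (le_of_lt hax) (.of_forall hbound)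
          (hgx.norm.const_mul ε)
    _ = ε * ∫ t in a..x, ‖g t‖ ∂μ := intervalIntegral.integral_const_mul ..
    _ ≤ ε * ‖∫ t in a..x, ‖g t‖ ∂μ‖ := by gcongr; exact Real.le_norm_self _

lemma isEquivalent_integral_const_mul_nhdsGT {f g : ℝ → ℝ} {c : ℝ}
    (hfg : f ~[𝓝[>] a] fun t ↦ c * g t) (hf : StronglyMeasurableAtFilter f (𝓝[>] a) μ)
    (hg : IntegrableAtFilter g (𝓝[>] a) μ) (hg₀ : ∀ᶠ t in 𝓝[>] a, 0 ≤ g t) :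
    (fun x ↦ ∫ t in a..x, f t ∂μ) ~[𝓝[>] a] fun x ↦ c * ∫ t in a..x, g t ∂μ := by
  have hcg : IntegrableAtFilter (fun t ↦ c * g t) (𝓝[>] a) μ := hg.smul c
  have hf_int : IntegrableAtFilter f (𝓝[>] a) μ := hfg.isBigO.integrableAtFilter hf hcg
  have hsub : (fun x ↦ ∫ t in a..x, (f t - c * g t) ∂μ) =ᶠ[𝓝[>] a]
      fun x ↦ (∫ t in a..x, f t ∂μ) - c * ∫ t in a..x, g t ∂μ := by
    filter_upwards [eventually_intervalIntegrable_of_integrableAtFilter_nhdsGT hf_int,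
      eventually_intervalIntegrable_of_integrableAtFilter_nhdsGT hcg] with x hfx hcgx
    rw [intervalIntegral.integral_sub hfx hcgx, intervalIntegral.integral_const_mul]
  have hnorm : (fun x ↦ ∫ t in a..x, ‖c * g t‖ ∂μ) =ᶠ[𝓝[>] a]
      fun x ↦ |c| * ∫ t in a..x, g t ∂μ := by
    filter_upwards [eventually_forall_mem_Ioc_of_eventually_nhdsGT hg₀, self_mem_nhdsWithin]
      with x hgx hax
    rw [← intervalIntegral.integral_const_mul]
    refine intervalIntegral.integral_congr_ae (.of_forall fun t ht ↦ ?_)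
    rw [uIoc_of_le (le_of_lt hax)] at ht
    rw [norm_mul, Real.norm_eq_abs c, Real.norm_of_nonneg (hgx t ht)]
  exact ((isLittleO_integral_nhdsGT hfg.isLittleO hcg).congr' hsub hnorm).trans_isBigO
    ((isBigO_refl (fun _ ↦ c) _).abs_left.mul (isBigO_refl _ _))

end Primitive

section PowLog

open Set Topology Asymptotics

/-- The regularly varying function `t ↦ t ^ α * log (1 / t) ^ β` of index `α` at `0⁺`, the scale on
which the kernel and its iterated primitives are measured. Only its values on `(0, 1)` matter. -/
noncomputable def powLog (α β t : ℝ) : ℝ :=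
  t ^ α * Real.log (1 / t) ^ β

variable {α β c : ℝ}

lemma tendsto_log_one_div_nhdsGT_zero :
    Tendsto (fun t : ℝ ↦ Real.log (1 / t)) (𝓝[>] 0) atTop := by
  simp only [one_div]
  exact Real.tendsto_log_atTop.comp tendsto_inv_nhdsGT_zero

lemma measurable_powLog (α β : ℝ) : Measurable (powLog α β) := by
  unfold powLog
  fun_prop

lemma log_one_div_pos {t : ℝ} (ht : t ∈ Ioo 0 1) : 0 < Real.log (1 / t) :=
  Real.log_pos (one_lt_one_div ht.1 ht.2)

lemma powLog_pos (α β : ℝ) {t : ℝ} (ht : t ∈ Ioo 0 1) : 0 < powLog α β t :=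
  mul_pos (Real.rpow_pos_of_pos ht.1 α) (Real.rpow_pos_of_pos (log_one_div_pos ht) β)

lemma eventually_powLog_pos (α β : ℝ) : ∀ᶠ t in 𝓝[>] 0, 0 < powLog α β t := by
  filter_upwards [Ioo_mem_nhdsGT one_pos] with t ht using powLog_pos α β ht

lemma hasDerivAt_powLog (α β : ℝ) {t : ℝ} (ht : t ∈ Ioo 0 1) :
    HasDerivAt (powLog (α + 1) β) (powLog α β t * (α + 1 - β / Real.log (1 / t))) t := by
  have ht₀ : t ≠ 0 := ht.1.ne'
  have hlog : Real.log (1 / t) ≠ 0 := (log_one_div_pos ht).ne'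
  have hderiv_rpow : HasDerivAt (fun t : ℝ ↦ t ^ (α + 1)) ((α + 1) * t ^ α) t := by
    simpa only [add_sub_cancel_right] using Real.hasDerivAt_rpow_const (p := α + 1) (.inl ht₀)
  have hderiv_log : HasDerivAt (fun t : ℝ ↦ Real.log (1 / t)) (-t⁻¹) t := by
    simp only [one_div, Real.log_inv]
    exact (Real.hasDerivAt_log ht₀).neg
  refine (hderiv_rpow.mul (hderiv_log.rpow_const (p := β) (.inl hlog))).congr_deriv ?_
  rw [powLog, Real.rpow_sub_one hlog, Real.rpow_add_one ht₀]
  field_simp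
  ring

lemma powLog_isLittleO_rpow {γ : ℝ} (β : ℝ) (hγ : γ < α) :
    powLog α β =o[𝓝[>] 0] fun t ↦ t ^ γ := by
  have hlog : (fun t ↦ |Real.log t| ^ β) =o[𝓝[>] 0] fun t ↦ t ^ (γ - α) :=
    isLittleO_abs_log_rpow_rpow_nhdsGT_zero β (by linarith)
  refine ((isBigO_refl (fun t : ℝ ↦ t ^ α) _).mul_isLittleO hlog).congr' ?_ ?_
  · filter_upwards [Ioo_mem_nhdsGT one_pos] with t ht
    rw [powLog, one_div, Real.log_inv, abs_of_neg (Real.log_neg ht.1 ht.2)]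
  · filter_upwards [self_mem_nhdsWithin] with t ht
    rw [← Real.rpow_add ht, add_sub_cancel]

lemma tendsto_powLog_nhdsGT_zero (β : ℝ) (hα : 0 < α) :
    Tendsto (powLog α β) (𝓝[>] 0) (𝓝 0) := by
  simpa only [Real.rpow_zero, isLittleO_one_iff] using powLog_isLittleO_rpow β hα

lemma integrableAtFilter_powLog (β : ℝ) (hα : -1 < α) :
    IntegrableAtFilter (powLog α β) (𝓝[>] 0) := by
  obtain ⟨γ, hγ, hγα⟩ := exists_between hα
  have hrpow : IntegrableAtFilter (fun t : ℝ ↦ t ^ γ) (𝓝[>] 0) :=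
    ⟨Ioo 0 1, Ioo_mem_nhdsGT one_pos,
      (intervalIntegral.integrableOn_Ioo_rpow_iff one_pos).2 hγ⟩
  exact (powLog_isLittleO_rpow β hγα).isBigO.integrableAtFilter
    (measurable_powLog α β).stronglyMeasurable.stronglyMeasurableAtFilter hrpow

lemma powLog_mul_sub_div_log_isEquivalent (β : ℝ) (hα : -1 < α) :
    (fun t ↦ powLog α β t * (α + 1 - β / Real.log (1 / t))) ~[𝓝[>] 0]
      fun t ↦ (α + 1) * powLog α β t := by
  have hlim : Tendsto (fun t : ℝ ↦ α + 1 - β / Real.log (1 / t)) (𝓝[>] 0) (𝓝 (α + 1)) := by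
    simpa only [sub_zero] using
      tendsto_const_nhds.sub (tendsto_log_one_div_nhdsGT_zero.const_div_atTop β)
  have hfactor := (isEquivalent_const_iff_tendsto (by linarith)).2 hlim
  simp only [mul_comm (powLog α β _)]
  exact hfactor.mul .refl

lemma powLog_isEquivalent_const_mul_integral (β : ℝ) (hα : -1 < α) :
    powLog (α + 1) β ~[𝓝[>] 0] fun T ↦ (α + 1) * ∫ t in 0..T, powLog α β t := by
  have hequiv := powLog_mul_sub_div_log_isEquivalent β hα
  have hmeas : StronglyMeasurableAtFilter
      (fun t ↦ powLog α β t * (α + 1 - β / Real.log (1 / t))) (𝓝[>] 0) := by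
    have := measurable_powLog α β
    exact (by fun_prop : Measurable _).stronglyMeasurable.stronglyMeasurableAtFilter
  have hint := integrableAtFilter_powLog β hα
  have hderiv_int := hequiv.isBigO.integrableAtFilter hmeas (hint.smul (α + 1))
  have hnonneg := (eventually_powLog_pos α β).mono fun _ ht ↦ ht.le
  refine (isEquivalent_integral_const_mul_nhdsGT hequiv hmeas hint hnonneg).congr_left ?_
  filter_upwards [eventually_intervalIntegrable_of_integrableAtFilter_nhdsGT hderiv_int,
    Ioo_mem_nhdsGT one_pos] with T hT_int hT
  rw [intervalIntegral.integral_eq_sub_of_hasDerivAt_of_tendsto hT.1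
    (fun t ht ↦ hasDerivAt_powLog α β ⟨ht.1, ht.2.trans hT.2⟩) hT_int
    (tendsto_powLog_nhdsGT_zero β (by linarith))
    ((hasDerivAt_powLog α β hT).continuousAt.mono_left nhdsWithin_le_nhds), sub_zero]

theorem isEquivalent_integral_of_isEquivalent_powLog {f : ℝ → ℝ} (hα : -1 < α)
    (hf : StronglyMeasurableAtFilter f (𝓝[>] 0))
    (hequiv : f ~[𝓝[>] 0] fun t ↦ c * powLog α β t) :
    (fun T ↦ ∫ t in 0..T, f t) ~[𝓝[>] 0] fun T ↦ c / (α + 1) * powLog (α + 1) β T := by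
  have hnonneg := (eventually_powLog_pos α β).mono fun _ ht ↦ ht.le
  have hα₀ : α + 1 ≠ 0 := by linarith
  calc (fun T ↦ ∫ t in 0..T, f t)
      ~[𝓝[>] 0] fun T ↦ c * ∫ t in 0..T, powLog α β t :=
        isEquivalent_integral_const_mul_nhdsGT hequiv hf (integrableAtFilter_powLog β hα) hnonneg
    _ = fun T ↦ c / (α + 1) * ((α + 1) * ∫ t in 0..T, powLog α β t) := by
        field_simp
    _ ~[𝓝[>] 0] fun T ↦ c / (α + 1) * powLog (α + 1) β T :=
        IsEquivalent.refl.mul (powLog_isEquivalent_const_mul_integral β hα).symm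

theorem isEquivalent_integral_integral_of_isEquivalent_powLog {f : ℝ → ℝ} (hα : -1 < α)
    (hf : StronglyMeasurableAtFilter f (𝓝[>] 0))
    (hequiv : f ~[𝓝[>] 0] fun t ↦ c * powLog α β t) :
    (fun T ↦ ∫ s in 0..T, ∫ t in 0..s, f t) ~[𝓝[>] 0]
      fun T ↦ c / ((α + 1) * (α + 2)) * powLog (α + 2) β T := by
  have hf_int := hequiv.isBigO.integrableAtFilter hf ((integrableAtFilter_powLog β hα).smul c)
  have htwice := isEquivalent_integral_of_isEquivalent_powLog (by linarith)
    (stronglyMeasurableAtFilter_integral_nhdsGT hf_int)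
    (isEquivalent_integral_of_isEquivalent_powLog hα hf hequiv)
  rwa [div_div, add_assoc, one_add_one_eq_two] at htwice

end PowLog

section LogKernel

open Set Topology Asymptotics

variable {H ζ : ℝ}

lemma measurable_logKernel (H ζ p C : ℝ) : Measurable (logKernel H ζ p C) := by
  unfold logKernel
  fun_prop

lemma logKernel_eventuallyEq_powLog (H p C : ℝ) (hζ : 0 < ζ) :
    logKernel H ζ p C =ᶠ[𝓝[>] 0] fun t ↦ C * ζ ^ (-p) * powLog (H - 1 / 2) (-p) t := by
  filter_upwards [tendsto_log_one_div_nhdsGT_zero.eventually_ge_atTop (1 / ζ),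
    Ioo_mem_nhdsGT one_pos] with t hζt ht
  have hmax : max (ζ * Real.log (1 / t)) 1 = ζ * Real.log (1 / t) :=
    max_eq_left ((div_le_iff₀' hζ).1 hζt)
  rw [logKernel, powLog, hmax, Real.mul_rpow hζ.le (log_one_div_pos ht).le]
  ring

theorem integral_integral_logKernel_isEquivalent (p C : ℝ) (hH : -1 / 2 < H) (hζ : 0 < ζ) :
    (fun T ↦ ∫ s in 0..T, ∫ r in 0..s, logKernel H ζ p C (s - r)) ~[𝓝[>] 0]
      fun T ↦ C * ζ ^ (-p) / ((H + 1 / 2) * (H + 3 / 2)) * powLog (H + 3 / 2) (-p) T := by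
  have hequiv := isEquivalent_integral_integral_of_isEquivalent_powLog (by linarith)
    (measurable_logKernel H ζ p C).stronglyMeasurable.stronglyMeasurableAtFilter
    (logKernel_eventuallyEq_powLog H p C hζ).isEquivalent
  simp only [intervalIntegral.integral_comp_sub_left (logKernel H ζ p C), sub_self, sub_zero]
  convert hequiv using 4 <;> ring

end LogKernel

theorem integrated_kernel_small_time_general (H ζ p C : ℝ) (hH : -1 / 2 < H) (hζ : 0 < ζ)
    (hC : C ≠ 0) :
    Tendsto
      (fun T : ℝ =>
        (∫ s in (0 : ℝ)..T, ∫ r in (0 : ℝ)..s, logKernel H ζ p C (s - r))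
          / (C * ζ ^ (-p) / ((H + 1/2) * (H + 3/2))
              * (Real.log (1 / T)) ^ (-p) * T ^ (H + 3/2)))
      (nhdsWithin 0 (Set.Ioi 0)) (nhds 1) := by
  have hconst : C * ζ ^ (-p) / ((H + 1/2) * (H + 3/2)) ≠ 0 := by
    have hH₁ : H + 1/2 ≠ 0 := by linarith
    have hH₃ : H + 3/2 ≠ 0 := by linarith
    positivity
  have hne : ∀ᶠ T in nhdsWithin 0 (Set.Ioi 0),
      C * ζ ^ (-p) / ((H + 1/2) * (H + 3/2)) * powLog (H + 3/2) (-p) T ≠ 0 :=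
    (eventually_powLog_pos _ _).mono fun _ hT ↦ mul_ne_zero hconst hT.ne'
  have hratio := (Asymptotics.isEquivalent_iff_tendsto_one hne).1
    (integral_integral_logKernel_isEquivalent p C hH hζ)
  refine hratio.congr fun T ↦ ?_
  rw [Pi.div_apply, powLog]
  ring

theorem integrated_kernel_small_time (H ζ p C : ℝ) (hH0 : 0 ≤ H) (hH : H < 1/2)
    (hζ : 0 < ζ) (hp : 1 < p) (hC : 0 < C) :
    Tendsto
      (fun T : ℝ =>
        (∫ s in (0 : ℝ)..T, ∫ r in (0 : ℝ)..s, logKernel H ζ p C (s - r))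
          / (C * ζ ^ (-p) / ((H + 1/2) * (H + 3/2))
              * (Real.log (1 / T)) ^ (-p) * T ^ (H + 3/2)))
      (nhdsWithin 0 (Set.Ioi 0)) (nhds 1) :=
  integrated_kernel_small_time_general H ζ p C (by linarith) hζ hC.ne'
end

section
/- Let H ∈ (0,1) and let 0 ≤ b ≤ s < t be real numbers. Then ∫₀ᵇ ( (t−r)^{H−1/2} − (s−r)^{H−1/2} )² dr = (t−s)^{2H} ∫_{(t−b)/(t−s)}^{t/(t−s)} ( y^{H−1/2} − (y−1)^{H−1/2} )² dy, and consequently ∫₀ᵇ ( (t−r)^{H−1/2} − (s−r)^{H−1/2} )² dr ≤ (t−s)^{2H} ∫₁^∞ ( y^{H−1/2} − (y−1)^{H−1/2} )² dy. -/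
open MeasureTheory

/-!
Substituting `y = (t - r) / (t - s)` turns `s - r` into `(t - s) * (y - 1)`, so homogeneity pulls
`(t - s) ^ (2 * H)` out of the integral. The bound follows by enlarging the interval to `(1, ∞)`,
provided the integrand is integrable there: near `1` because `x ^ (2 * H - 1)` is integrable at `0`,
and at infinity because the increment is `O(y ^ (H - 3 / 2))` by the mean value theorem.
-/

theorem sq_rpow_sub_rpow_eq_mul_sq_div {c x y : ℝ} (hc : 0 < c) (hx : 0 ≤ x) (hy : 0 ≤ y)
    (a : ℝ) :
    (x ^ a - y ^ a) ^ 2 = c ^ (2 * a) * ((x / c) ^ a - (y / c) ^ a) ^ 2 := by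
  have hca : c ^ a ≠ 0 := (Real.rpow_pos_of_pos hc a).ne'
  have hsq : c ^ (2 * a) = (c ^ a) ^ 2 := by
    rw [mul_comm]
    exact Real.rpow_mul_natCast hc.le a 2
  rw [hsq, Real.div_rpow hx hc.le, Real.div_rpow hy hc.le]
  field_simp

theorem integral_sq_rpow_sub_rpow_eq {s t u v : ℝ} (hst : s < t) (hu : u ≤ s) (hv : v ≤ s)
    (a : ℝ) :
    ∫ r in u..v, ((t - r) ^ a - (s - r) ^ a) ^ 2 =
      (t - s) ^ (2 * a + 1) *
        ∫ y in ((t - v) / (t - s))..((t - u) / (t - s)), (y ^ a - (y - 1) ^ a) ^ 2 := by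
  have hpos : 0 < t - s := sub_pos.2 hst
  have rescale : ∀ r ∈ Set.uIcc u v, ((t - r) ^ a - (s - r) ^ a) ^ 2 =
      (t - s) ^ (2 * a) *
        ((t / (t - s) - r / (t - s)) ^ a - (t / (t - s) - r / (t - s) - 1) ^ a) ^ 2 := by
    intro r hr
    have hrs : r ≤ s := hr.2.trans (sup_le hu hv)
    have hshift : t / (t - s) - r / (t - s) - 1 = (s - r) / (t - s) := by
      field_simp
      ring
    rw [hshift, ← sub_div]
    exact sq_rpow_sub_rpow_eq_mul_sq_div hpos (by linarith) (by linarith) a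
  rw [intervalIntegral.integral_congr rescale, intervalIntegral.integral_const_mul,
    intervalIntegral.integral_comp_sub_div (fun y ↦ (y ^ a - (y - 1) ^ a) ^ 2) hpos.ne',
    smul_eq_mul, Real.rpow_add_one hpos.ne', mul_assoc, sub_div, sub_div]

section Integrability

variable {a c d : ℝ}

theorem memLp_two_sub_rpow_Ioc {u : ℝ} (ha : -1 / 2 < a) (hcu : c ≤ u) (v : ℝ) :
    MemLp (fun y : ℝ ↦ (y - c) ^ a) 2 (volume.restrict (Set.Ioc u v)) := by
  have hmeas : Measurable fun y : ℝ ↦ (y - c) ^ a := by fun_prop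
  rw [memLp_two_iff_integrable_sq hmeas.aestronglyMeasurable]
  have hint : IntervalIntegrable (fun y : ℝ ↦ (y - c) ^ (a * 2)) volume u v := by
    simpa using (intervalIntegral.intervalIntegrable_rpow' (a := u - c) (b := v - c)
      (show -1 < a * 2 by linarith)).comp_sub_right c
  refine IntegrableOn.congr_fun hint.1 (fun y hy ↦ ?_) measurableSet_Ioc
  exact Real.rpow_mul_natCast (by linarith [hy.1]) a 2

theorem abs_rpow_sub_rpow_le {x y : ℝ} (ha : a ≤ 1) (hx : 0 < x) (hxy : x ≤ y) :
    |y ^ a - x ^ a| ≤ |a| * x ^ (a - 1) * (y - x) := by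
  have hderiv : ∀ z ∈ Set.Icc x y,
      HasDerivWithinAt (fun z : ℝ ↦ z ^ a) (a * z ^ (a - 1)) (Set.Icc x y) z := fun z hz ↦
    (Real.hasDerivAt_rpow_const (Or.inl (hx.trans_le hz.1).ne')).hasDerivWithinAt
  have hbound : ∀ z ∈ Set.Ico x y, ‖a * z ^ (a - 1)‖ ≤ |a| * x ^ (a - 1) := by
    intro z hz
    rw [Real.norm_eq_abs, abs_mul, abs_of_nonneg (Real.rpow_nonneg (hx.le.trans hz.1) _)]
    gcongr |a| * ?_
    exact Real.rpow_le_rpow_of_nonpos hx hz.1 (by linarith)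
  exact norm_image_sub_le_of_norm_deriv_le_segment' hderiv hbound y (Set.right_mem_Icc.2 hxy)

theorem integrableOn_Ioc_sq_rpow_sub_rpow (ha : -1 / 2 < a) (hcd : c ≤ d) (v : ℝ) :
    IntegrableOn (fun y : ℝ ↦ ((y - c) ^ a - (y - d) ^ a) ^ 2) (Set.Ioc d v) :=
  ((memLp_two_sub_rpow_Ioc ha hcd v).sub (memLp_two_sub_rpow_Ioc ha le_rfl v)).integrable_sq

theorem integrableOn_Ioi_sq_rpow_sub_rpow_of_lt {u : ℝ} (ha : a < 1 / 2) (hcd : c ≤ d)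
    (hdu : d < u) :
    IntegrableOn (fun y : ℝ ↦ ((y - c) ^ a - (y - d) ^ a) ^ 2) (Set.Ioi u) := by
  have hmeas : Measurable fun y : ℝ ↦ ((y - c) ^ a - (y - d) ^ a) ^ 2 := by fun_prop
  have hdom : IntegrableOn (fun y : ℝ ↦ (|a| * (d - c)) ^ 2 * (y + -d) ^ ((a - 1) * 2))
      (Set.Ioi u) :=
    (integrableOn_add_rpow_Ioi_of_lt (by linarith) (by linarith)).const_mul _
  refine Integrable.mono' hdom hmeas.aestronglyMeasurable ?_
  filter_upwards [ae_restrict_mem measurableSet_Ioi] with y (hy : u < y)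
  have hpos : 0 < y - d := by linarith
  calc ‖((y - c) ^ a - (y - d) ^ a) ^ 2‖
      = |(y - c) ^ a - (y - d) ^ a| ^ 2 := by rw [norm_pow, Real.norm_eq_abs]
    _ ≤ (|a| * (y - d) ^ (a - 1) * (y - c - (y - d))) ^ 2 := by
      gcongr
      exact abs_rpow_sub_rpow_le (by linarith) hpos (by linarith)
    _ = (|a| * (d - c)) ^ 2 * ((y - d) ^ (a - 1)) ^ 2 := by ring
    _ = (|a| * (d - c)) ^ 2 * (y + -d) ^ ((a - 1) * 2) := by
      rw [← sub_eq_add_neg]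
      congr 1
      exact (Real.rpow_mul_natCast hpos.le (a - 1) 2).symm

theorem integrableOn_Ioi_sq_rpow_sub_rpow (ha : -1 / 2 < a) (ha' : a < 1 / 2) (hcd : c ≤ d) :
    IntegrableOn (fun y : ℝ ↦ ((y - c) ^ a - (y - d) ^ a) ^ 2) (Set.Ioi d) := by
  have hd : d < d + 1 := lt_add_one d
  rw [← Set.Ioc_union_Ioi_eq_Ioi hd.le]
  exact (integrableOn_Ioc_sq_rpow_sub_rpow ha hcd _).union
    (integrableOn_Ioi_sq_rpow_sub_rpow_of_lt ha' hcd hd)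

end Integrability

theorem intervalIntegral_le_integral_Ioi {μ : Measure ℝ} {f : ℝ → ℝ} {c u v : ℝ}
    (hf : 0 ≤ᵐ[μ.restrict (Set.Ioi c)] f) (hint : IntegrableOn f (Set.Ioi c) μ)
    (hcu : c ≤ u) (huv : u ≤ v) :
    ∫ y in u..v, f y ∂μ ≤ ∫ y in Set.Ioi c, f y ∂μ := by
  rw [intervalIntegral.integral_of_le huv]
  exact setIntegral_mono_set hint hf
    (Set.Ioc_subset_Ioi_self.trans (Set.Ioi_subset_Ioi hcu)).eventuallyLE

theorem power_increment_change_of_variables (H : ℝ) (hH0 : 0 < H) (hH : H < 1)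
    (b s t : ℝ) (hb : 0 ≤ b) (hbs : b ≤ s) (hst : s < t) :
    (∫ r in (0 : ℝ)..b, ((t - r) ^ (H - 1/2) - (s - r) ^ (H - 1/2)) ^ 2
        = (t - s) ^ (2 * H)
            * ∫ y in ((t - b) / (t - s))..(t / (t - s)),
                (y ^ (H - 1/2) - (y - 1) ^ (H - 1/2)) ^ 2)
    ∧ (∫ r in (0 : ℝ)..b, ((t - r) ^ (H - 1/2) - (s - r) ^ (H - 1/2)) ^ 2
        ≤ (t - s) ^ (2 * H)
            * ∫ y in Set.Ioi (1 : ℝ), (y ^ (H - 1/2) - (y - 1) ^ (H - 1/2)) ^ 2) := by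
  have hpos : 0 < t - s := sub_pos.2 hst
  have hexp : 2 * (H - 1/2) + 1 = 2 * H := by ring
  have hsubst := integral_sq_rpow_sub_rpow_eq hst (hb.trans hbs) hbs (H - 1/2)
  rw [hexp, sub_zero] at hsubst
  have hint : IntegrableOn (fun y : ℝ ↦ (y ^ (H - 1/2) - (y - 1) ^ (H - 1/2)) ^ 2)
      (Set.Ioi 1) := by
    simpa only [sub_zero] using integrableOn_Ioi_sq_rpow_sub_rpow (a := H - 1/2)
      (by linarith) (by linarith) zero_le_one
  have hlower : 1 ≤ (t - b) / (t - s) := (one_le_div hpos).2 (by linarith)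
  have hupper : (t - b) / (t - s) ≤ t / (t - s) := by gcongr; linarith
  refine ⟨hsubst, hsubst.trans_le ?_⟩
  gcongr
  exact intervalIntegral_le_integral_Ioi (.of_forall fun y ↦ sq_nonneg _) hint hlower hupper
end
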